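/- (Diagonalized version.) For every k, r ∈ ℕ with k, r ≥ 1 and every colouring c : ⋃_{j=1}^{k} FIN_{±j}^[∞] → {0, …, r−1} that is Souslin measurable with respect to the disjoint union topology (each FIN_{±j}^[∞] carrying its metrizable topology), there exist i₁, …, i_k < r and an infinite block sequence P ∈ FIN_{±k}^[∞] such that for each j = 1, …, k, ⟨T^{(k−j)}(P)⟩_{±j}^[∞] ⊆ (c⁻¹{i_j})₁. -/

import Mathlib

open Function Set

/-- `p` is an element of `FIN_{±k}`: finitely supported, values in `{0, ±1, …, ±k}`,
attaining one of the values `±k`. -/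
def IsFin (k : ℕ) (p : ℕ → ℤ) : Prop :=
  (Function.support p).Finite ∧ (∀ n, |p n| ≤ (k : ℤ)) ∧ (∃ n, |p n| = (k : ℤ))

/-- `p < q` in the block ordering: every point of `supp p` precedes every point of `supp q`. -/
def BlockLt (p q : ℕ → ℤ) : Prop :=
  ∀ m n : ℕ, p m ≠ 0 → q n ≠ 0 → m < n

/-- The tetris operation `T`. -/
def tetris (p : ℕ → ℤ) : ℕ → ℤ := fun n =>
  if 0 < p n then p n - 1 else if p n < 0 then p n + 1 else 0

/-- The sign-flipped tetris operation `-T`. -/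
def negT (p : ℕ → ℤ) : ℕ → ℤ := -(tetris p)

/-- The weak tetris operation `S`. -/
def Sop (p : ℕ → ℤ) : ℕ → ℤ := fun n => if |p n| = 1 then 0 else p n

/-- `‖p‖ ≤ c` for the `ℓ∞` norm. -/
def normLe (p : ℕ → ℤ) (c : ℕ) : Prop := ∀ n, |p n| ≤ (c : ℤ)

/-- `(A)_c`, the `c`-fattening of `A`. -/
def approx (c : ℕ) (A : Set (ℕ → ℤ)) : Set (ℕ → ℤ) :=
  {p | ∃ q ∈ A, normLe (p - q) c}

/-- `P` is an infinite block sequence in `FIN_{±k}`. -/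
def IsBlockSeq (k : ℕ) (P : ℕ → ℕ → ℤ) : Prop :=
  (∀ n, IsFin k (P n)) ∧ ∀ m n : ℕ, m < n → BlockLt (P m) (P n)

/-- `t` is a finite block sequence in `FIN_{±k}` (coded as a list). -/
def IsFinBlockSeq (k : ℕ) (t : List (ℕ → ℤ)) : Prop :=
  (∀ p ∈ t, IsFin k p) ∧ t.Pairwise BlockLt

/-- `q ∈ ⟨P⟩_{±k}`: `q = ε₀T^{j₀}(p_{n₀}) + ⋯ + ε_m T^{j_m}(p_{n_m})` with `n₀ < ⋯ < n_m`,
`εᵢ ∈ {±1}`, `jᵢ < k` and `min jᵢ = 0`. -/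
def InSpanPM (k : ℕ) (P : ℕ → ℕ → ℤ) (q : ℕ → ℤ) : Prop :=
  ∃ (m : ℕ) (n : Fin (m + 1) → ℕ) (ε : Fin (m + 1) → ℤ) (j : Fin (m + 1) → ℕ),
    StrictMono n ∧ (∀ i, ε i = 1 ∨ ε i = -1) ∧ (∀ i, j i < k) ∧ (∃ i, j i = 0) ∧
    q = ∑ i, ε i • tetris^[j i] (P (n i))

/-- `q ∈ ⟨P⟩_{(−T)}`. -/
def InSpanNegT (k : ℕ) (P : ℕ → ℕ → ℤ) (q : ℕ → ℤ) : Prop :=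
  ∃ (m : ℕ) (n : Fin (m + 1) → ℕ) (j : Fin (m + 1) → ℕ),
    StrictMono n ∧ (∀ i, j i < k) ∧ (∃ i, j i = 0) ∧
    q = ∑ i, negT^[j i] (P (n i))

/-- `q ∈ ⟨p_a, …, p_b⟩_{(−T)}`. -/
def InSpanNegTRange (k : ℕ) (P : ℕ → ℕ → ℤ) (a b : ℕ) (q : ℕ → ℤ) : Prop :=
  ∃ (m : ℕ) (n : Fin (m + 1) → ℕ) (j : Fin (m + 1) → ℕ),
    StrictMono n ∧ (∀ i, a ≤ n i ∧ n i ≤ b) ∧ (∀ i, j i < k) ∧ (∃ i, j i = 0) ∧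
    q = ∑ i, negT^[j i] (P (n i))

/-- A cofinite ultrafilter on `FIN_{±k}` (coded as an ultrafilter on `ℕ → ℤ`
concentrating on `FIN_{±k}`). -/
def IsCofiniteUF (k : ℕ) (𝒰 : Ultrafilter (ℕ → ℤ)) : Prop :=
  {p | IsFin k p} ∈ 𝒰 ∧ ∀ m : ℕ, {p : ℕ → ℤ | ∀ n < m, p n = 0} ∈ 𝒰

/-- `A ∈ 𝒰 + 𝒱`. -/
def SumMem (𝒰 𝒱 : Ultrafilter (ℕ → ℤ)) (A : Set (ℕ → ℤ)) : Prop :=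
  {p | {q | BlockLt p q ∧ p + q ∈ A} ∈ 𝒱} ∈ 𝒰

/-- `𝒰` is subsymmetric: `A ∈ 𝒰` implies `−(A)₁ ∈ 𝒰`. -/
def IsSubsymmetric (𝒰 : Ultrafilter (ℕ → ℤ)) : Prop :=
  ∀ A ∈ 𝒰, {p : ℕ → ℤ | -p ∈ approx 1 A} ∈ 𝒰

/-- `𝒰 + (−T)^j 𝒰 = (−T)^j 𝒰 + 𝒰 = 𝒰` for all `j ≤ k`. -/
def IsIdempotentUF (k : ℕ) (𝒰 : Ultrafilter (ℕ → ℤ)) : Prop :=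
  ∀ j ≤ k, ∀ A : Set (ℕ → ℤ),
    (SumMem 𝒰 (Ultrafilter.map (negT^[j]) 𝒰) A ↔ A ∈ 𝒰) ∧
    (SumMem (Ultrafilter.map (negT^[j]) 𝒰) 𝒰 A ↔ A ∈ 𝒰)

/-- A cofinite subsymmetric ultrafilter on `FIN_{±k}` idempotent with respect to
all the maps `(−T)^j`, `j ≤ k`. -/
def IsGowersUF (k : ℕ) (𝒰 : Ultrafilter (ℕ → ℤ)) : Prop :=
  IsCofiniteUF k 𝒰 ∧ IsSubsymmetric 𝒰 ∧ IsIdempotentUF k 𝒰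

/-- A `𝒰`-tree on `FIN_{±k}` with stem `s`. -/
structure IsUTree (k : ℕ) (𝒰 : Ultrafilter (ℕ → ℤ)) (U : Set (List (ℕ → ℤ)))
    (s : List (ℕ → ℤ)) : Prop where
  blocks : ∀ t ∈ U, IsFinBlockSeq k t
  prefixClosed : ∀ t ∈ U, ∀ t' : List (ℕ → ℤ), t' <+: t → t' ∈ U
  stemMem : s ∈ U
  stemComparable : ∀ t ∈ U, s <+: t ∨ t <+: s
  branch : ∀ t ∈ U, s <+: t → {p | t ++ [p] ∈ U} ∈ 𝒰

/-- `[U]`, the set of infinite branches of a tree of finite block sequences. -/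
def Branches (U : Set (List (ℕ → ℤ))) : Set (ℕ → ℕ → ℤ) :=
  {P | ∀ n : ℕ, (List.ofFn fun i : Fin n => P i.1) ∈ U}

/-- The space `FIN_{±k}^[∞]` of infinite block sequences. -/
def BlockSeq (k : ℕ) : Type := {P : ℕ → ℕ → ℤ // IsBlockSeq k P}

/-- The metrizable topology on `FIN_{±k}^[∞]`, generated by the basic sets `[s]`. -/
instance BlockSeq.topology (k : ℕ) : TopologicalSpace (BlockSeq k) :=
  TopologicalSpace.generateFrom
    {O | ∃ s : List (ℕ → ℤ),
      O = {P : BlockSeq k | ∀ i : Fin s.length, P.1 i.1 = s.get i}}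

/-- The Souslin operation applied to a Souslin scheme. -/
def SouslinOp {α : Type*} (F : List ℕ → Set α) : Set α :=
  ⋃ x : ℕ → ℕ, ⋂ n : ℕ, F (List.ofFn fun i : Fin n => x i.1)

/-- `A` is Souslin measurable: it belongs to every field of sets containing the open
sets and closed under the Souslin operation. -/
def SouslinMeasurable {α : Type*} [TopologicalSpace α] (A : Set α) : Prop :=
  ∀ 𝓕 : Set (Set α),
    (∀ O : Set α, IsOpen O → O ∈ 𝓕) →
    (∀ B ∈ 𝓕, Bᶜ ∈ 𝓕) →
    (∀ B ∈ 𝓕, ∀ C ∈ 𝓕, B ∪ C ∈ 𝓕) →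
    (∀ F : List ℕ → Set α, (∀ s, F s ∈ 𝓕) → SouslinOp F ∈ 𝓕) →
    A ∈ 𝓕

/-- The map `Φ_m : FIN_{±2m} → FIN_{±m}` (its defining formula does not depend on `m`). -/
def Phi (p : ℕ → ℤ) : ℕ → ℤ := fun n =>
  if p n % 2 = 0 then p n / 2
  else if 0 < p n then (p n - 1) / 2
  else (p n + 1) / 2

/-- `Ψ = Φ_k ∘ Φ_{2k} : FIN_{±4k} → FIN_{±k}`. -/
def Psi (p : ℕ → ℤ) : ℕ → ℤ := Phi (Phi p)

/-!
The proof is an ultrafilter argument at level `2 * k`. Ellis' lemma, applied in the compact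
semigroup of cofinite subsymmetric ultrafilters, gives `w` on `FIN_{±2k}` whose images under the
powers of `-T` satisfy `(-T)^i w + (-T)^j w = (-T)^(min i j) w`.

For every `j`, the map `Φ` takes `(-T)^(2 * (k - j)) w` to a cofinite ultrafilter on `FIN_{±j}`.
Souslin sets are Ramsey with respect to trees branching along an ultrafilter, for the same reason
that Souslin sets are measurable; hence one of the colours contains all branches of such a tree
`B j`.

The identities for `w` allow a fusion: there is a block sequence `P` in `FIN_{±2k}` such that every
sequence of consecutive sums `∑ n, (-T)^(i n) (P n)` with `min i = 2 * (k - j)` consists of elements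
which the ultrafilter regards as typical for the node of `B j` reached so far. An arbitrary element
of `⟨T^(k - j) (Φ P)⟩_{±j}` involves both signs and all powers of `T`. It is `Φ` of a combination of
the `± T^(2 * l) (P n)`, and replacing `T^(2 * l)` by `(-T)^(2 * l)` or `(-T)^(2 * l + 1)` realises
either sign, at the cost of an error of one. Subsymmetry corrects the remaining overall sign, at the
cost of another error of one, and `Φ` halves the total error of two.
-/

section UltraRamsey

open Filter PiNat

variable {α ι : Type*} {f : Filter α} {s : List α} {A A' : Set (ℕ → α)}

theorem exists_forall_eq_apply_res (g : List α → α) : ∃ x : ℕ → α, ∀ n, x n = g (res x n) := by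
  let l : ℕ → List α := fun n ↦ n.rec [] fun _ t ↦ g t :: t
  have res_eq (n : ℕ) : res (fun m ↦ g (l m)) n = l n := by
    induction n with
    | zero => rfl
    | succ n ih => rw [res_succ, ih]
  exact ⟨fun m ↦ g (l m), fun n ↦ by rw [res_eq]⟩

theorem exists_res_length_eq [Nonempty α] (s : List α) : ∃ x : ℕ → α, res x s.length = s := by
  induction s with
  | nil => exact ⟨Classical.arbitrary _, rfl⟩
  | cons p s ih =>
    obtain ⟨x, hx⟩ := ih
    refine ⟨Function.update x s.length p, ?_⟩
    rw [List.length_cons, res_succ, Function.update_self]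
    nth_rw 3 [← hx]
    rw [res_eq_res.2 fun m hm ↦ Function.update_of_ne hm.ne p x]

theorem res_suffix_res (x : ℕ → α) {m n : ℕ} (h : m ≤ n) : res x m <:+ res x n := by
  induction n, h using Nat.le_induction with
  | base => exact List.suffix_rfl
  | succ n _ ih => exact ih.trans (List.suffix_cons _ _)

theorem ofFn_eq_reverse_res (x : ℕ → α) (n : ℕ) :
    (List.ofFn fun i : Fin n ↦ x i) = (res x n).reverse := by
  induction n with
  | zero => simp
  | succ n ih =>
    rw [List.ofFn_succ', List.concat_eq_append, res_succ, List.reverse_cons, ← ih]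
    rfl

theorem mem_res_of_lt (x : ℕ → α) {m n : ℕ} (h : m < n) : x m ∈ res x n :=
  (res_suffix_res x h).subset (by simp [res_succ])

/-- The sequences that extend the stem `s` and from then on follow the tree in which the node `t`
has the set `B t` of successors. Here and below finite sequences are listed in reverse order, the
last entry first, as by `PiNat.res`. -/
def treeBranches (s : List α) (B : List α → Set α) : Set (ℕ → α) :=
  {x | res x s.length = s ∧ ∀ n, s.length ≤ n → x n ∈ B (res x n)}

theorem treeBranches_mono {B C : List α → Set α} (h : ∀ t, B t ⊆ C t) :
    treeBranches s B ⊆ treeBranches s C :=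
  fun _ hx ↦ ⟨hx.1, fun n hn ↦ h _ (hx.2 n hn)⟩

theorem treeBranches_res_subset {B : List α → Set α} {x : ℕ → α} (hx : x ∈ treeBranches s B)
    {m : ℕ} (hm : s.length ≤ m) : treeBranches (res x m) B ⊆ treeBranches s B := by
  rintro y ⟨hy, hy'⟩
  rw [res_length, res_eq_res] at hy
  have hys : res y s.length = s :=
    (res_eq_res.2 fun _ hi ↦ hy (hi.trans_le hm)).trans hx.1
  refine ⟨hys, fun n hn ↦ ?_⟩
  rcases lt_or_ge n m with hnm | hmn
  · rw [hy hnm, res_eq_res.2 fun _ hi ↦ hy (hi.trans hnm)]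
    exact hx.2 n hn
  · exact hy' n (by rwa [res_length])

theorem treeBranches_nonempty {B : List α → Set α} (h : ∀ t, (B t).Nonempty) :
    (treeBranches s B).Nonempty := by
  have : Nonempty α := (h []).to_type
  choose g hg using h
  obtain ⟨x₀, hx₀⟩ := exists_res_length_eq s
  obtain ⟨x, hx⟩ := exists_forall_eq_apply_res fun t ↦
    if t.length < s.length then x₀ t.length else g t
  simp only [res_length] at hx
  refine ⟨x, ?_, fun n hn ↦ ?_⟩
  · exact (res_eq_res.2 fun m hm ↦ by rw [hx, if_pos hm]).trans hx₀
  · rw [hx, if_neg hn.not_gt]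
    exact hg _

/-- `A` contains all branches of some `f`-tree with stem `s`. -/
def Accepts (f : Filter α) (s : List α) (A : Set (ℕ → α)) : Prop :=
  ∃ B : List α → Set α, (∀ t, B t ∈ f) ∧ treeBranches s B ⊆ A

namespace Accepts

theorem mono (h : Accepts f s A) (hA : A ⊆ A') : Accepts f s A' :=
  let ⟨B, hB, hBA⟩ := h
  ⟨B, hB, hBA.trans hA⟩

theorem inter (h : Accepts f s A) (h' : Accepts f s A') : Accepts f s (A ∩ A') :=
  let ⟨B, hB, hBA⟩ := h
  let ⟨C, hC, hCA⟩ := h'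
  ⟨fun t ↦ B t ∩ C t, fun t ↦ inter_mem (hB t) (hC t),
    subset_inter ((treeBranches_mono fun _ ↦ inter_subset_left).trans hBA)
      ((treeBranches_mono fun _ ↦ inter_subset_right).trans hCA)⟩

theorem nonempty [f.NeBot] (h : Accepts f s A) : A.Nonempty :=
  let ⟨_, hB, hBA⟩ := h
  (treeBranches_nonempty fun t ↦ nonempty_of_mem (hB t)).mono hBA

end Accepts

theorem exists_forall_mem_of_accepts_res (f : Filter α) (A : ℕ → Set (ℕ → α)) :
    ∃ B : List α → Set α, (∀ t, B t ∈ f) ∧ ∀ s, ∀ x ∈ treeBranches s B, ∀ n m, s.length ≤ m →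
      n ≤ m → Accepts f (res x m) (A n) → x ∈ A n := by
  have exists_tree (n : ℕ) (t : List α) : ∃ C : List α → Set α, (∀ r, C r ∈ f) ∧
      (Accepts f t (A n) → treeBranches t C ⊆ A n) := by
    by_cases h : Accepts f t (A n)
    · obtain ⟨C, hC, hCA⟩ := h
      exact ⟨C, hC, fun _ ↦ hCA⟩
    · exact ⟨fun _ ↦ univ, fun _ ↦ univ_mem, fun h' ↦ absurd h' h⟩
  choose C hC hCA using exists_tree
  refine ⟨fun t ↦ ⋂ n ∈ Iic t.length, ⋂ r ∈ {r | r ∈ t.tails}, C n r t, fun t ↦ ?_,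
    fun s x hx n m hsm hnm h ↦ hCA n _ h ⟨by rw [res_length], fun i hi ↦ ?_⟩⟩
  · exact (biInter_mem (finite_Iic _)).2 fun n _ ↦
      (biInter_mem (List.finite_toSet _)).2 fun r _ ↦ hC n r t
  · rw [res_length] at hi
    have hxi := hx.2 i (hsm.trans hi)
    simp only [mem_iInter] at hxi
    exact hxi n (by simpa using hnm.trans hi) _ ((List.mem_tails _ _).2 (res_suffix_res x hi))

namespace Accepts

theorem of_cons (h : {p | Accepts f (p :: s) A} ∈ f) : Accepts f s A := by
  obtain ⟨B, hB, hBA⟩ := exists_forall_mem_of_accepts_res f fun _ ↦ A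
  refine ⟨fun t ↦ B t ∩ {p | t = s → Accepts f (p :: s) A}, fun t ↦ inter_mem (hB t) ?_,
    fun x hx ↦ hBA s x (treeBranches_mono (fun _ ↦ inter_subset_left) hx) 0 (s.length + 1)
      (Nat.le_succ _) (Nat.zero_le _) ?_⟩
  · by_cases hts : t = s
    · simpa [hts] using h
    · simp [hts]
  · have hx' := (hx.2 _ le_rfl).2 hx.1
    rwa [res_succ, hx.1]

theorem iInter [Countable ι] {A : ι → Set (ℕ → α)} (h : ∀ i t, Accepts f t (A i)) (s : List α) :
    Accepts f s (⋂ i, A i) := by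
  rcases isEmpty_or_nonempty ι with hι | hι
  · exact ⟨fun _ ↦ univ, fun _ ↦ univ_mem, by simp⟩
  obtain ⟨e, he⟩ := exists_surjective_nat ι
  obtain ⟨B, hB, hBA⟩ := exists_forall_mem_of_accepts_res f fun n ↦ A (e n)
  refine ⟨B, hB, fun x hx ↦ mem_iInter.2 <| he.forall.2 fun n ↦ ?_⟩
  exact hBA s x hx n (max n s.length) (le_max_right _ _) (le_max_left _ _) (h _ _)

end Accepts

/-- A weak form of openness of `G` in the topology generated by the branch sets of `f`-trees: an
accepting tree with stem an initial segment of `x` need not have `x` itself as a branch. -/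
def IsTreeOpen (f : Filter α) (G : Set (ℕ → α)) : Prop :=
  ∀ x ∈ G, ∀ᶠ n in atTop, Accepts f (res x n) G

/-- The interior of `A` in the topology generated by the branch sets of `f`-trees. -/
def treeInterior (f : Filter α) (A : Set (ℕ → α)) : Set (ℕ → α) :=
  ⋃ (s : List α) (B : List α → Set α) (_ : (∀ t, B t ∈ f) ∧ treeBranches s B ⊆ A), treeBranches s B

theorem treeInterior_subset : treeInterior f A ⊆ A :=
  iUnion_subset fun _ ↦ iUnion₂_subset fun _ h ↦ h.2

theorem Accepts.treeInterior (h : Accepts f s A) : Accepts f s (treeInterior f A) :=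
  let ⟨B, hB, hBA⟩ := h
  ⟨B, hB, subset_iUnion_of_subset s (subset_iUnion₂_of_subset B ⟨hB, hBA⟩ Subset.rfl)⟩

theorem isTreeOpen_treeInterior : IsTreeOpen f (treeInterior f A) := by
  intro x hx
  simp only [treeInterior, mem_iUnion] at hx
  obtain ⟨s, B, ⟨hB, hBA⟩, hx⟩ := hx
  filter_upwards [eventually_ge_atTop s.length] with n hn
  exact Accepts.treeInterior ⟨B, hB, (treeBranches_res_subset hx hn).trans hBA⟩

/-- `A` is Ramsey with respect to `f`-trees: every stem accepts `A` or its complement. -/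
def IsRamsey (f : Filter α) (A : Set (ℕ → α)) : Prop :=
  ∀ s, Accepts f s A ∨ Accepts f s Aᶜ

theorem IsTreeOpen.isRamsey {u : Ultrafilter α} {G : Set (ℕ → α)}
    (hG : IsTreeOpen (u : Filter α) G) : IsRamsey (u : Filter α) G := by
  refine fun s ↦ or_iff_not_imp_left.2 fun hs ↦
    ⟨fun t ↦ {p | Accepts u (p :: t) G → Accepts u t G}, fun t ↦ ?_, fun x hx hxG ↦ ?_⟩
  · by_cases ht : Accepts u t G
    · simp [ht]
    · simp only [ht, imp_false]
      exact Ultrafilter.compl_mem_iff_notMem.2 (mt Accepts.of_cons ht)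
  · have rejects (n : ℕ) (hn : s.length ≤ n) : ¬Accepts u (res x n) G := by
      induction n, hn using Nat.le_induction with
      | base => rwa [hx.1]
      | succ n hn ih => exact mt (hx.2 n hn) ih
    obtain ⟨n, hn, hsn⟩ := ((hG x hxG).and (eventually_ge_atTop s.length)).exists
    exact rejects n hsn hn

theorem IsTreeOpen.of_initial_segments {G : Set (ℕ → α)}
    (hG : ∀ x ∈ G, ∃ N, ∀ y, res y N = res x N → y ∈ G) : IsTreeOpen f G := by
  intro x hx
  obtain ⟨N, hN⟩ := hG x hx
  filter_upwards [eventually_ge_atTop N] with n hn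
  refine ⟨fun _ ↦ univ, fun _ ↦ univ_mem, fun y hy ↦ hN y ?_⟩
  have hyx := hy.1
  rw [res_length, res_eq_res] at hyx
  exact res_eq_res.2 fun _ hm ↦ hyx (hm.trans_le hn)

namespace IsRamsey

theorem compl (h : IsRamsey f A) : IsRamsey f Aᶜ :=
  fun s ↦ by simpa only [compl_compl] using (h s).symm

theorem inter (h : IsRamsey f A) (h' : IsRamsey f A') : IsRamsey f (A ∩ A') := by
  intro s
  rcases h s with hs | hs
  · rcases h' s with hs' | hs'
    · exact .inl (hs.inter hs')
    · exact .inr (hs'.mono (compl_subset_compl.2 inter_subset_right))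
  · exact .inr (hs.mono (compl_subset_compl.2 inter_subset_left))

theorem union (h : IsRamsey f A) (h' : IsRamsey f A') : IsRamsey f (A ∪ A') := by
  simpa only [compl_inter, compl_compl] using (h.compl.inter h'.compl).compl

theorem exists_accepts_of_iUnion [f.NeBot] [Finite ι] {A : ι → Set (ℕ → α)}
    (hA : ∀ i, IsRamsey f (A i)) (h : Accepts f s (⋃ i, A i)) : ∃ i, Accepts f s (A i) := by
  by_contra! hs
  have accepts_compl (i : ι) : Accepts f s (A i)ᶜ := (hA i s).resolve_left (hs i)
  choose B hB hBA using accepts_compl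
  obtain ⟨x, hx, hx'⟩ := (h.inter ⟨fun t ↦ ⋂ i, B i t, fun t ↦ iInter_mem.2 fun i ↦ hB i t,
    subset_iInter fun i ↦ (treeBranches_mono fun _ ↦ iInter_subset _ i).trans (hBA i)⟩).nonempty
  obtain ⟨i, hi⟩ := mem_iUnion.1 hx
  exact mem_iInter.1 hx' i hi

variable {u : Ultrafilter α}

theorem iUnion [Countable ι] {A : ι → Set (ℕ → α)} (hA : ∀ i, IsRamsey (u : Filter α) (A i)) :
    IsRamsey (u : Filter α) (⋃ i, A i) := by
  let G := treeInterior u (⋃ i, A i)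
  have hG : IsRamsey (u : Filter α) G := isTreeOpen_treeInterior.isRamsey
  -- Where `G` is rejected, so is every `A i`, because acceptance of `A i` is inherited by `G`.
  have accepts_compl (i : ι) (s : List α) : Accepts u s (A i \ G)ᶜ := by
    rcases hA i s with h | h
    · refine (h.mono (subset_iUnion A i)).treeInterior.mono fun x hx ↦ ?_
      exact fun hx' ↦ hx'.2 hx
    · exact h.mono (compl_subset_compl.2 sdiff_subset)
  refine fun s ↦ (hG s).imp (·.mono treeInterior_subset) fun h ↦
    (h.inter (.iInter accepts_compl s)).mono ?_
  rintro x ⟨hxG, hx⟩ hxA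
  obtain ⟨i, hi⟩ := mem_iUnion.1 hxA
  exact mem_iInter.1 hx i ⟨hi, hxG⟩

end IsRamsey

section Souslin

variable {F : List ℕ → Set (ℕ → α)} {u : Ultrafilter α}

/-- The part of the Souslin set of `F` coming from the indices that extend `σ`. -/
def souslinPart (F : List ℕ → Set (ℕ → α)) (σ : List ℕ) : Set (ℕ → α) :=
  {x | ∃ i : ℕ → ℕ, res i σ.length = σ ∧ ∀ n, x ∈ F (res i n).reverse}

theorem souslinPart_nil : souslinPart F [] = SouslinOp F := by
  ext x
  simp [souslinPart, SouslinOp, ofFn_eq_reverse_res]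

theorem souslinPart_subset (σ : List ℕ) : souslinPart F σ ⊆ F σ.reverse := by
  rintro x ⟨i, hi, hx⟩
  simpa only [hi] using hx σ.length

theorem souslinPart_subset_iUnion (σ : List ℕ) :
    souslinPart F σ ⊆ ⋃ n, souslinPart F (n :: σ) := by
  rintro x ⟨i, hi, hx⟩
  exact mem_iUnion.2 ⟨i σ.length, i, by rw [List.length_cons, res_succ, hi], hx⟩

/-- A Ramsey set containing `souslinPart F σ`, the analogue of a measurable envelope. -/
def souslinHull (f : Filter α) (F : List ℕ → Set (ℕ → α)) (σ : List ℕ) : Set (ℕ → α) :=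
  F σ.reverse \ treeInterior f (souslinPart F σ)ᶜ

theorem souslinPart_subset_souslinHull (σ : List ℕ) : souslinPart F σ ⊆ souslinHull f F σ :=
  fun _ hx ↦ ⟨souslinPart_subset σ hx, fun hx' ↦ treeInterior_subset hx' hx⟩

theorem isRamsey_souslinHull (hF : ∀ σ, IsRamsey (u : Filter α) (F σ)) (σ : List ℕ) :
    IsRamsey (u : Filter α) (souslinHull u F σ) :=
  (hF _).inter isTreeOpen_treeInterior.isRamsey.compl

/-- Otherwise `s` accepts the difference, which misses `souslinPart F σ`; then `s` accepts the
interior of the complement of the latter, but the hull misses that interior. -/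
theorem accepts_compl_souslinHull_diff (hF : ∀ σ, IsRamsey (u : Filter α) (F σ)) (σ : List ℕ)
    (s : List α) : Accepts u s (souslinHull u F σ \ ⋃ n, souslinHull u F (n :: σ))ᶜ := by
  refine (((isRamsey_souslinHull hF σ).inter
    (IsRamsey.iUnion fun n ↦ isRamsey_souslinHull hF (n :: σ)).compl) s).resolve_left fun h ↦ ?_
  have accepts_compl : Accepts u s (souslinPart F σ)ᶜ := h.mono fun x hx hxσ ↦
    hx.2 <| iUnion_mono (fun _ ↦ souslinPart_subset_souslinHull _) (souslinPart_subset_iUnion σ hxσ)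
  obtain ⟨x, hx, hx'⟩ := (h.inter accepts_compl.treeInterior).nonempty
  exact hx.1.2 hx'

theorem souslinHull_nil_subset :
    souslinHull f F [] ∩ ⋂ σ, (souslinHull f F σ \ ⋃ n, souslinHull f F (n :: σ))ᶜ ⊆
      SouslinOp F := by
  rintro x ⟨hx, hx'⟩
  have exists_cons (σ : List ℕ) : ∃ n, x ∈ souslinHull f F σ → x ∈ souslinHull f F (n :: σ) := by
    by_cases hσ : x ∈ souslinHull f F σ
    · obtain ⟨n, hn⟩ := mem_iUnion.1 <| of_not_not fun h ↦ mem_iInter.1 hx' σ ⟨hσ, h⟩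
      exact ⟨n, fun _ ↦ hn⟩
    · exact ⟨0, fun h ↦ absurd h hσ⟩
  choose g hg using exists_cons
  obtain ⟨i, hi⟩ := exists_forall_eq_apply_res g
  have mem_hull (n : ℕ) : x ∈ souslinHull f F (res i n) := by
    induction n with
    | zero => exact hx
    | succ n ih => rw [res_succ, hi]; exact hg _ ih
  rw [← souslinPart_nil]
  exact ⟨i, rfl, fun n ↦ (mem_hull n).1⟩

theorem IsRamsey.souslinOp (hF : ∀ σ, IsRamsey (u : Filter α) (F σ)) :
    IsRamsey (u : Filter α) (SouslinOp F) := fun s ↦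
  (isRamsey_souslinHull hF [] s).imp
    (fun h ↦ (h.inter (.iInter (accepts_compl_souslinHull_diff hF) s)).mono souslinHull_nil_subset)
    (·.mono <| compl_subset_compl.2 <| souslinPart_nil ▸ souslinPart_subset_souslinHull [])

end Souslin

end UltraRamsey
section Coordinates

variable {a b i j k : ℕ} {p q : ℕ → ℤ} {v w : ℤ}

/-- The `i`-th iterate of the tetris operation on a single coordinate: `v` is moved towards `0`
by `i` units. -/
def shrink (i : ℕ) (v : ℤ) : ℤ := max (v - i) 0 + min (v + i) 0

theorem shrink_zero_left (v : ℤ) : shrink 0 v = v := by simp only [shrink]; omega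

theorem shrink_zero_right (i : ℕ) : shrink i 0 = 0 := by simp only [shrink]; omega

theorem shrink_neg (i : ℕ) (v : ℤ) : shrink i (-v) = -shrink i v := by
  simp only [shrink]; omega

theorem shrink_shrink (i j : ℕ) (v : ℤ) : shrink i (shrink j v) = shrink (i + j) v := by
  simp only [shrink]; omega

theorem abs_shrink (i : ℕ) (v : ℤ) : |shrink i v| = max (|v| - i) 0 := by
  simp only [shrink, abs_eq_max_neg]; omega

theorem abs_shrink_sub_shrink_le (i : ℕ) (v w : ℤ) : |shrink i v - shrink i w| ≤ |v - w| := by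
  simp only [shrink, abs_eq_max_neg]; omega

theorem abs_shrink_sub_shrink_succ_le (i : ℕ) (v : ℤ) : |shrink i v - shrink (i + 1) v| ≤ 1 := by
  simp only [shrink, abs_eq_max_neg]; omega

theorem tdiv_two_eq_ite (v : ℤ) : v.tdiv 2 = if 0 ≤ v then v / 2 else (v + 1) / 2 := by
  split_ifs with h
  · exact Int.tdiv_eq_ediv_of_nonneg h
  · rw [← neg_neg v, Int.neg_tdiv, Int.tdiv_eq_ediv_of_nonneg (by omega)]
    omega

theorem shrink_tdiv_two (i : ℕ) (v : ℤ) : shrink i (v.tdiv 2) = (shrink (2 * i) v).tdiv 2 := by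
  simp only [shrink, tdiv_two_eq_ite]
  split_ifs <;> omega

theorem abs_tdiv_two_sub_tdiv_two_le (h : |v - w| ≤ 2) : |v.tdiv 2 - w.tdiv 2| ≤ 1 := by
  rw [abs_le] at *
  simp only [tdiv_two_eq_ite]
  split_ifs <;> omega

theorem tetris_eq_comp (p : ℕ → ℤ) : tetris p = shrink 1 ∘ p := by
  ext n
  simp only [tetris, comp_apply, shrink]
  split_ifs <;> omega

theorem tetris_iterate_eq_comp (i : ℕ) (p : ℕ → ℤ) : tetris^[i] p = shrink i ∘ p := by
  induction i with
  | zero => ext n; simp [shrink_zero_left]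
  | succ i ih =>
    ext n
    simp only [iterate_succ_apply', ih, tetris_eq_comp, comp_apply, shrink_shrink, add_comm 1 i]

theorem negT_iterate_eq (i : ℕ) (p : ℕ → ℤ) : negT^[i] p = fun n ↦ (-1) ^ i * shrink i (p n) := by
  induction i with
  | zero => ext n; simp [shrink_zero_left]
  | succ i ih =>
    have shrink_sign (v : ℤ) : shrink 1 ((-1) ^ i * v) = (-1) ^ i * shrink 1 v := by
      rcases neg_one_pow_eq_or ℤ i with h | h <;> simp [h, shrink_neg]
    ext n
    simp only [iterate_succ_apply', ih, negT, tetris_eq_comp, Pi.neg_apply, comp_apply, shrink_sign,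
      shrink_shrink, add_comm 1 i, pow_succ]
    ring

theorem phi_eq_comp (p : ℕ → ℤ) : Phi p = (·.tdiv 2) ∘ p := by
  ext n
  simp only [Phi, comp_apply, tdiv_two_eq_ite]
  split_ifs <;> omega

theorem IsFin.comp (hp : IsFin a p) {φ : ℤ → ℤ} (h0 : φ 0 = 0)
    (hle : ∀ v, |v| ≤ (a : ℤ) → |φ v| ≤ b) (heq : ∀ v, |v| = (a : ℤ) → |φ v| = b) :
    IsFin b (φ ∘ p) :=
  ⟨hp.1.subset (support_comp_subset h0 p), fun n ↦ hle _ (hp.2.1 n),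
    hp.2.2.imp fun _ hn ↦ heq _ hn⟩

theorem IsFin.tetris_iterate (hp : IsFin a p) (i : ℕ) : IsFin (a - i) (tetris^[i] p) := by
  rw [tetris_iterate_eq_comp]
  refine hp.comp (shrink_zero_right i) (fun v hv ↦ ?_) fun v hv ↦ ?_ <;> rw [abs_shrink] <;> omega

theorem IsFin.negT_iterate (hp : IsFin a p) (i : ℕ) : IsFin (a - i) (negT^[i] p) := by
  rw [negT_iterate_eq]
  refine hp.comp (φ := fun v ↦ (-1) ^ i * shrink i v) (by simp [shrink_zero_right])
    (fun v hv ↦ ?_) fun v hv ↦ ?_ <;>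
    rw [abs_mul, abs_neg_one_pow, one_mul, abs_shrink] <;> omega

theorem IsFin.phi (hp : IsFin (2 * k) p) : IsFin k (Phi p) := by
  rw [phi_eq_comp]
  refine hp.comp (Int.zero_tdiv 2) (fun v hv ↦ ?_) fun v hv ↦ ?_ <;>
    simp only [tdiv_two_eq_ite, abs_eq_max_neg] at * <;> split_ifs <;> omega

theorem IsFin.eq_zero (hp : IsFin 0 p) : p = 0 :=
  funext fun n ↦ by simpa using hp.2.1 n

theorem negT_iterate_add (i : ℕ) (h : ∀ n, p n = 0 ∨ q n = 0) :
    negT^[i] (p + q) = negT^[i] p + negT^[i] q := by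
  simp only [negT_iterate_eq]
  ext n
  rcases h n with h | h <;> simp [h, shrink_zero_right]

theorem normLe_negT_iterate_sub (i : ℕ) (h : normLe (p - q) b) :
    normLe (negT^[i] p - negT^[i] q) b := fun n ↦ by
  simp only [negT_iterate_eq, Pi.sub_apply, ← mul_sub, abs_mul, abs_neg_one_pow, one_mul]
  exact (abs_shrink_sub_shrink_le i (p n) (q n)).trans (h n)

theorem IsBlockSeq.comp {P : ℕ → ℕ → ℤ} (hP : IsBlockSeq a P) {φ : (ℕ → ℤ) → ℕ → ℤ}
    (hφ : ∀ p, IsFin a p → IsFin b (φ p)) (hsupp : ∀ p n, p n = 0 → φ p n = 0) :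
    IsBlockSeq b fun n ↦ φ (P n) :=
  ⟨fun n ↦ hφ _ (hP.1 n), fun m n hmn x y hx hy ↦
    hP.2 m n hmn x y (mt (hsupp _ _) hx) (mt (hsupp _ _) hy)⟩

end Coordinates
section Ultrafilters

open Filter

attribute [local instance] Ultrafilter.add Ultrafilter.addSemigroup

theorem continuous_ultrafilter_map {α β : Type*} (f : α → β) :
    Continuous (Ultrafilter.map f : Ultrafilter α → Ultrafilter β) :=
  ultrafilterBasis_is_basis.continuous_iff.2 <| forall_mem_range.2 fun s ↦
    ultrafilter_isOpen_basic (f ⁻¹' s)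

theorem pure_zero_add {M : Type*} [AddZeroClass M] (u : Ultrafilter M) : pure 0 + u = u :=
  Ultrafilter.eq_of_le fun A hA ↦ by
    change ∀ᶠ q in u, 0 + q ∈ A
    simpa using hA

theorem add_pure_zero {M : Type*} [AddZeroClass M] (u : Ultrafilter M) : u + pure 0 = u :=
  Ultrafilter.eq_of_le fun A hA ↦ by
    change ∀ᶠ p in u, p + 0 ∈ A
    simpa using hA

/-- With `v` an idempotent of the subsemigroup `X + w`, the element `w + v` is as desired. -/
theorem exists_idempotent_absorbing {M : Type*} [AddSemigroup M] [TopologicalSpace M] [T2Space M]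
    (hM : ∀ r : M, Continuous (· + r)) {X : Set M} (hne : X.Nonempty) (hX : IsCompact X)
    (hadd : ∀ᵉ (x ∈ X) (y ∈ X), x + y ∈ X) {w : M} (hw : w + w = w) (hXw : ∀ x ∈ X, x + w ∈ X)
    (hwX : ∀ x ∈ X, w + x ∈ X) : ∃ z ∈ X, z + z = z ∧ z + w = z ∧ w + z = z := by
  obtain ⟨_, ⟨x, hx, rfl⟩, hv⟩ := exists_idempotent_in_compact_add_subsemigroup hM ((· + w) '' X)
    (hne.image _) (hX.image (hM w)) <| by
      rintro _ ⟨x, hx, rfl⟩ _ ⟨y, hy, rfl⟩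
      exact ⟨x + w + y, hadd _ (hXw x hx) y hy, by simp only [add_assoc]⟩
  refine ⟨w + (x + w), hwX _ (hXw x hx), ?_, ?_, ?_⟩
  · calc w + (x + w) + (w + (x + w)) = w + (x + (w + w) + (x + w)) := by simp only [add_assoc]
      _ = w + (x + w) := by rw [hw, hv]
  · rw [add_assoc, add_assoc, hw]
  · rw [← add_assoc, hw]

variable {a b c d i j K n : ℕ} {p q : ℕ → ℤ} {u u' v v' : Ultrafilter (ℕ → ℤ)}

theorem BlockLt.eq_zero_or_eq_zero (h : BlockLt p q) (n : ℕ) : p n = 0 ∨ q n = 0 :=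
  or_iff_not_imp_left.2 fun hp ↦ of_not_not fun hq ↦ (h n n hp hq).false

theorem IsFin.add (hp : IsFin a p) (hq : IsFin b q) (h : BlockLt p q) :
    IsFin (max a b) (p + q) := by
  refine ⟨(hp.1.union hq.1).subset (support_add p q), fun n ↦ ?_, ?_⟩
  · rcases h.eq_zero_or_eq_zero n with hn | hn
    · simpa [hn] using .inr (hq.2.1 n)
    · simpa [hn] using .inl (hp.2.1 n)
  · obtain ⟨m, hm⟩ := hp.2.2
    obtain ⟨n, hn⟩ := hq.2.2
    have hpn := h.eq_zero_or_eq_zero n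
    have hqm := h.eq_zero_or_eq_zero m
    have hqm' := hq.2.1 m
    have hpn' := hp.2.1 n
    rcases le_total a b with hab | hab
    · refine ⟨n, ?_⟩
      simp only [Pi.add_apply, abs_eq_max_neg] at *
      omega
    · refine ⟨m, ?_⟩
      simp only [Pi.add_apply, abs_eq_max_neg] at *
      omega

theorem IsCofiniteUF.eventually_blockLt (hu : IsCofiniteUF a u) (hp : (support p).Finite) :
    ∀ᶠ q in u, BlockLt p q := by
  obtain ⟨N, hN⟩ := hp.bddAbove
  filter_upwards [hu.2 (N + 1)] with q hq m n hm hn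
  exact (hN hm).trans_lt (not_lt.1 fun h ↦ hn (hq n h))

theorem IsCofiniteUF.add (hu : IsCofiniteUF a u) (hv : IsCofiniteUF b v) :
    IsCofiniteUF (max a b) (u + v) := by
  refine ⟨?_, fun m ↦ ?_⟩
  · change ∀ᶠ p in u, ∀ᶠ q in v, IsFin (max a b) (p + q)
    filter_upwards [hu.1] with p hp
    filter_upwards [hv.1, hv.eventually_blockLt hp.1] with q hq hpq
    exact IsFin.add hp hq hpq
  · change ∀ᶠ p in u, ∀ᶠ q in v, ∀ n < m, (p + q : ℕ → ℤ) n = 0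
    filter_upwards [hu.2 m] with p hp
    filter_upwards [hv.2 m] with q hq n hn
    rw [Pi.add_apply, hp n hn, hq n hn, add_zero]

theorem IsCofiniteUF.map (hu : IsCofiniteUF a u) {φ : (ℕ → ℤ) → ℕ → ℤ}
    (hφ : ∀ p, IsFin a p → IsFin b (φ p)) (hsupp : ∀ p n, p n = 0 → φ p n = 0) :
    IsCofiniteUF b (u.map φ) :=
  ⟨Ultrafilter.mem_map.2 <| mem_of_superset hu.1 hφ, fun m ↦ Ultrafilter.mem_map.2 <|
    mem_of_superset (hu.2 m) fun _ hp n hn ↦ hsupp _ _ (hp n hn)⟩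

theorem IsCofiniteUF.map_negT_iterate (hu : IsCofiniteUF a u) (i : ℕ) :
    IsCofiniteUF (a - i) (u.map negT^[i]) :=
  hu.map (fun _ hp ↦ hp.negT_iterate i) fun p n hp ↦ by
    simp [negT_iterate_eq, hp, shrink_zero_right]

theorem IsCofiniteUF.eq_pure_zero (hu : IsCofiniteUF 0 u) : u = pure 0 :=
  Ultrafilter.eq_of_le <| le_pure_iff.2 <| mem_of_superset hu.1 fun _ hp ↦ hp.eq_zero

theorem map_negT_iterate_map (i j : ℕ) (u : Ultrafilter (ℕ → ℤ)) :
    (u.map negT^[i]).map negT^[j] = u.map negT^[i + j] := by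
  rw [Ultrafilter.map_map, ← iterate_add, add_comm]

theorem map_negT_iterate_add (hu : IsCofiniteUF a u) (hv : IsCofiniteUF b v) (i : ℕ) :
    (u + v).map negT^[i] = u.map negT^[i] + v.map negT^[i] := by
  refine Ultrafilter.eq_of_le fun A hA ↦ ?_
  change ∀ᶠ p in u, ∀ᶠ q in v, negT^[i] p + negT^[i] q ∈ A at hA
  change ∀ᶠ p in u, ∀ᶠ q in v, negT^[i] (p + q) ∈ A
  filter_upwards [hA, hu.1] with p hpA hp
  filter_upwards [hpA, hv.eventually_blockLt hp.1] with q hq hpq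
  rwa [negT_iterate_add i hpq.eq_zero_or_eq_zero]

/-- `u`-almost every `p` is within distance `1` of the negative of a member of each prescribed set
of `v`. Thus `u` is subsymmetric when it reflects itself. -/
def Reflects (u v : Ultrafilter (ℕ → ℤ)) : Prop :=
  ∀ A ∈ v, {p : ℕ → ℤ | -p ∈ approx 1 A} ∈ u

theorem Reflects.map_negT_iterate (h : Reflects u v) (i : ℕ) :
    Reflects (u.map negT^[i]) (v.map negT^[i]) := by
  refine fun A hA ↦ Ultrafilter.mem_map.2 ?_
  filter_upwards [h _ hA] with p ⟨q, hq, hpq⟩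
  refine ⟨_, hq, fun n ↦ ?_⟩
  have hn := normLe_negT_iterate_sub i hpq n
  simpa [negT_iterate_eq, shrink_neg] using hn

theorem Reflects.add (hu : IsCofiniteUF a u) (hu' : IsCofiniteUF b u') (hv : IsCofiniteUF c v)
    (hv' : IsCofiniteUF d v') (h : Reflects u v) (h' : Reflects u' v') :
    Reflects (u + u') (v + v') := by
  intro A hA
  change ∀ᶠ y in v, ∀ᶠ z in v', y + z ∈ A at hA
  change ∀ᶠ p in u, ∀ᶠ q in u', -(p + q) ∈ approx 1 A
  filter_upwards [h _ (inter_mem hA hv.1), hu.1] with p ⟨y, ⟨hyA, hy⟩, hpy⟩ hp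
  filter_upwards [hu'.eventually_blockLt hp.1, hu'.eventually_blockLt hy.1,
    h' _ (inter_mem hyA (inter_mem (hv'.eventually_blockLt hp.1) (hv'.eventually_blockLt hy.1)))]
    with q hpq hyq ⟨z, ⟨hzA, hpz, hyz⟩, hqz⟩
  refine ⟨y + z, hzA, fun n ↦ ?_⟩
  have hpyn := hpy n
  have hqzn := hqz n
  have h₁ := hpq.eq_zero_or_eq_zero n
  have h₂ := hyq.eq_zero_or_eq_zero n
  have h₃ := BlockLt.eq_zero_or_eq_zero hpz n
  have h₄ := BlockLt.eq_zero_or_eq_zero hyz n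
  simp only [Pi.sub_apply, Pi.neg_apply, Pi.add_apply, abs_eq_max_neg] at *
  omega

/-- The subsymmetric cofinite ultrafilters on `FIN_{±K}`. -/
def subsymmetricUF (K : ℕ) : Set (Ultrafilter (ℕ → ℤ)) :=
  {u | IsCofiniteUF K u ∧ Reflects u u}

theorem isClosed_subsymmetricUF (K : ℕ) : IsClosed (subsymmetricUF K) := by
  have subsymmetricUF_eq : subsymmetricUF K = ({u | {p | IsFin K p} ∈ u} ∩
      ⋂ m : ℕ, {u | {p : ℕ → ℤ | ∀ n < m, p n = 0} ∈ u}) ∩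
      ⋂ A : Set (ℕ → ℤ), ({u | A ∈ u}ᶜ ∪ {u | {p : ℕ → ℤ | -p ∈ approx 1 A} ∈ u}) := by
    ext u
    simp only [subsymmetricUF, IsCofiniteUF, Reflects, imp_iff_not_or, mem_inter_iff, mem_iInter,
      mem_union, mem_compl_iff, mem_ofPred_eq]
  rw [subsymmetricUF_eq]
  refine ((ultrafilter_isClosed_basic _).inter
    (isClosed_iInter fun m ↦ ultrafilter_isClosed_basic _)).inter (isClosed_iInter fun A ↦ ?_)
  exact (ultrafilter_isOpen_basic A).isClosed_compl.union (ultrafilter_isClosed_basic _)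

theorem add_mem_subsymmetricUF (hu : u ∈ subsymmetricUF a) (hv : v ∈ subsymmetricUF b) :
    u + v ∈ subsymmetricUF (max a b) :=
  ⟨hu.1.add hv.1, .add hu.1 hv.1 hu.1 hv.1 hu.2 hv.2⟩

theorem map_negT_iterate_mem_subsymmetricUF (hu : u ∈ subsymmetricUF a) (i : ℕ) :
    u.map negT^[i] ∈ subsymmetricUF (a - i) :=
  ⟨hu.1.map_negT_iterate i, hu.2.map_negT_iterate i⟩

/-- A nonprincipal ultrafilter of functions with a single nonzero value `c`. -/
noncomputable def spike (c : ℤ) : Ultrafilter (ℕ → ℤ) :=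
  (hyperfilter ℕ).map fun n ↦ Pi.single n c

theorem isCofiniteUF_spike (c : ℤ) : IsCofiniteUF c.natAbs (spike c) := by
  refine ⟨univ_mem' (f := (hyperfilter ℕ : Filter ℕ)) fun n ↦ ⟨?_, fun m ↦ ?_, n, by simp⟩,
    fun m ↦ ?_⟩
  · exact (finite_singleton n).subset Pi.support_single_subset
  · rcases eq_or_ne m n with rfl | h <;> simp [*]
  · change ∀ᶠ n in hyperfilter ℕ, ∀ i < m, (Pi.single n c : ℕ → ℤ) i = 0
    filter_upwards [Nat.hyperfilter_le_atTop (eventually_ge_atTop m)] with n hn i hi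
    exact Pi.single_eq_of_ne (M := fun _ ↦ ℤ) (hi.trans_le hn).ne c

theorem reflects_spike {s t : ℤ} (h : |s + t| ≤ 1) : Reflects (spike s) (spike t) := by
  intro A hA
  change ∀ᶠ n in hyperfilter ℕ, (Pi.single n t : ℕ → ℤ) ∈ A at hA
  change ∀ᶠ n in hyperfilter ℕ, -(Pi.single n s : ℕ → ℤ) ∈ approx 1 A
  filter_upwards [hA] with n hn
  refine ⟨_, hn, fun m ↦ ?_⟩
  rcases eq_or_ne m n with rfl | hm
  · rwa [Pi.sub_apply, Pi.neg_apply, Pi.single_eq_same, Pi.single_eq_same, ← neg_add', abs_neg]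
  · simp [hm]

theorem spike_zero : spike 0 = pure 0 :=
  IsCofiniteUF.eq_pure_zero (isCofiniteUF_spike 0)

/-- The ultrafilter of sums of `n` successive spikes of heights `f 0, …, f (n - 1)`. -/
noncomputable def spikeSum (f : ℕ → ℤ) : ℕ → Ultrafilter (ℕ → ℤ)
  | 0 => pure 0
  | n + 1 => spikeSum f n + spike (f n)

theorem isCofiniteUF_spikeSum (f : ℕ → ℤ) (n : ℕ) :
    IsCofiniteUF ((Finset.range n).sup fun i ↦ (f i).natAbs) (spikeSum f n) := by
  induction n with
  | zero => simpa [spikeSum, spike_zero] using isCofiniteUF_spike 0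
  | succ n ih =>
    rw [Finset.range_add_one, Finset.sup_insert, sup_comm]
    exact ih.add (isCofiniteUF_spike (f n))

theorem reflects_spikeSum {f g : ℕ → ℤ} (h : ∀ i, |f i + g i| ≤ 1) (n : ℕ) :
    Reflects (spikeSum f n) (spikeSum g n) := by
  induction n with
  | zero => simpa [spikeSum, spike_zero] using reflects_spike (s := 0) (t := 0) (by simp)
  | succ n ih =>
    exact .add (isCofiniteUF_spikeSum f n) (isCofiniteUF_spike _) (isCofiniteUF_spikeSum g n)
      (isCofiniteUF_spike _) ih (reflects_spike (h n))

theorem spikeSum_succ' (f : ℕ → ℤ) (n : ℕ) :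
    spikeSum f (n + 1) = spike (f 0) + spikeSum (fun i ↦ f (i + 1)) n := by
  induction n with
  | zero => simp only [spikeSum, pure_zero_add, add_pure_zero]
  | succ n ih => rw [spikeSum, ih, spikeSum, add_assoc]

/-- Spikes of heights `0, -1, 2, …, ±K, …, 2, -1, 0`: deleting the first `0` shifts every other
spike next to one of nearly opposite height, while the ultrafilter stays the same. -/
theorem subsymmetricUF_nonempty (K : ℕ) : (subsymmetricUF K).Nonempty := by
  let f : ℕ → ℤ := fun i ↦ (-1) ^ i * (min i (2 * K - i) : ℕ)
  have natAbs_f (i : ℕ) : (f i).natAbs = min i (2 * K - i) := by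
    simp only [f, Int.natAbs_mul, Int.natAbs_pow, Int.natAbs_neg, Int.natAbs_one, one_pow, one_mul,
      Int.natAbs_natCast]
  have sum_shift : spikeSum (fun i ↦ f (i + 1)) (2 * K) = spikeSum f (2 * K) := by
    have h₀ : f 0 = 0 := by simp [f]
    have h₁ : f (2 * K) = 0 := by simp [f]
    have h := spikeSum_succ' f (2 * K)
    rwa [spikeSum, h₀, h₁, spike_zero, pure_zero_add, add_pure_zero, eq_comm] at h
  have level : (Finset.range (2 * K)).sup (fun i ↦ (f i).natAbs) = K := by
    simp only [natAbs_f]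
    refine le_antisymm (Finset.sup_le fun i _ ↦ by omega) ?_
    rcases K.eq_zero_or_pos with rfl | hK
    · exact Nat.zero_le _
    · exact (by omega : K ≤ min K (2 * K - K)).trans <|
        Finset.le_sup (f := fun i ↦ min i (2 * K - i)) (Finset.mem_range.2 (by omega))
  refine ⟨spikeSum f (2 * K), by simpa only [level] using isCofiniteUF_spikeSum f (2 * K), ?_⟩
  nth_rw 2 [← sum_shift]
  refine reflects_spikeSum (fun i ↦ ?_) _
  have add_eq : f i + f (i + 1) = (-1) ^ i *
      ((min i (2 * K - i) : ℕ) - (min (i + 1) (2 * K - (i + 1)) : ℕ) : ℤ) := by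
    simp only [f, pow_succ]
    ring
  rw [add_eq, abs_mul, abs_neg_one_pow, one_mul, abs_le]
  omega

theorem add_mem_image_subsymmetricUF (hu : u ∈ Ultrafilter.map negT^[i] '' subsymmetricUF K)
    (hv : v ∈ Ultrafilter.map negT^[j] '' subsymmetricUF K) :
    u + v ∈ Ultrafilter.map negT^[min i j] '' subsymmetricUF K := by
  obtain ⟨u, hu, rfl⟩ := hu
  obtain ⟨v, hv, rfl⟩ := hv
  have hu' := map_negT_iterate_mem_subsymmetricUF hu (i - min i j)
  have hv' := map_negT_iterate_mem_subsymmetricUF hv (j - min i j)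
  have level : max (K - (i - min i j)) (K - (j - min i j)) = K := by omega
  refine ⟨_, level ▸ add_mem_subsymmetricUF hu' hv', ?_⟩
  rw [map_negT_iterate_add hu'.1 hv'.1, map_negT_iterate_map, map_negT_iterate_map,
    Nat.sub_add_cancel (min_le_left i j), Nat.sub_add_cancel (min_le_right i j)]

theorem exists_lift_absorbing {w : Ultrafilter (ℕ → ℤ)}
    (hw : w ∈ Ultrafilter.map negT^[n + 1] '' subsymmetricUF K)
    (hww : w + w = w) (hw₁ : w + w.map negT = w) (hw₂ : w.map negT + w = w) :
    ∃ z ∈ Ultrafilter.map negT^[n] '' subsymmetricUF K,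
      z.map negT = w ∧ z + z = z ∧ z + w = z ∧ w + z = z := by
  let X := Ultrafilter.map negT^[n] '' subsymmetricUF K ∩ Ultrafilter.map negT ⁻¹' {w}
  have map_add {x y : Ultrafilter (ℕ → ℤ)} {l m : ℕ}
      (hx : x ∈ Ultrafilter.map negT^[l] '' subsymmetricUF K)
      (hy : y ∈ Ultrafilter.map negT^[m] '' subsymmetricUF K) :
      (x + y).map negT = x.map negT + y.map negT := by
    obtain ⟨x, hx, rfl⟩ := hx
    obtain ⟨y, hy, rfl⟩ := hy
    exact map_negT_iterate_add (hx.1.map_negT_iterate l) (hy.1.map_negT_iterate m) 1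
  have hX : IsCompact X := ((isClosed_subsymmetricUF K).isCompact.image
    (continuous_ultrafilter_map _)).inter_right
      (isClosed_singleton.preimage (continuous_ultrafilter_map _))
  have hne : X.Nonempty := by
    obtain ⟨u, hu, rfl⟩ := hw
    exact ⟨_, ⟨u, hu, rfl⟩, map_negT_iterate_map n 1 u⟩
  obtain ⟨z, ⟨hz, hzw⟩, h⟩ := exists_idempotent_absorbing Ultrafilter.continuous_add_left hne hX
    (fun x ⟨hx, hxw⟩ y ⟨hy, hyw⟩ ↦ ⟨by simpa using add_mem_image_subsymmetricUF hx hy,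
      (map_add hx hy).trans (by rw [hxw, hyw, hww])⟩) hww
    (fun x ⟨hx, hxw⟩ ↦ ⟨by simpa using add_mem_image_subsymmetricUF hx hw,
      (map_add hx hw).trans (by rw [hxw, hw₁])⟩)
    (fun x ⟨hx, hxw⟩ ↦ ⟨by simpa using add_mem_image_subsymmetricUF hw hx,
      (map_add hw hx).trans (by rw [hxw, hw₂])⟩)
  exact ⟨z, hz, hzw, h⟩

theorem exists_absorbing_negT_iterate (hn : n ≤ K) :
    ∃ w ∈ Ultrafilter.map negT^[n] '' subsymmetricUF K,
      ∀ i, w + w.map negT^[i] = w ∧ w.map negT^[i] + w = w := by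
  induction hn using Nat.decreasingInduction with
  | self =>
    obtain ⟨u, hu⟩ := subsymmetricUF_nonempty K
    have map_eq (i : ℕ) : u.map negT^[K + i] = pure 0 :=
      IsCofiniteUF.eq_pure_zero <| by simpa using hu.1.map_negT_iterate (K + i)
    refine ⟨_, ⟨u, hu, rfl⟩, fun i ↦ ?_⟩
    have h := pure_zero_add (pure 0 : Ultrafilter (ℕ → ℤ))
    rw [map_negT_iterate_map, map_eq, show u.map negT^[K] = pure 0 from map_eq 0]
    exact ⟨h, h⟩
  | of_succ n _ ih =>
    obtain ⟨w, hw, hwi⟩ := ih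
    obtain ⟨z, hz, rfl, hzz, hzw, hwz⟩ := exists_lift_absorbing hw (hwi 0).1 (hwi 1).1 (hwi 1).2
    refine ⟨z, hz, fun i ↦ ?_⟩
    cases i with
    | zero => exact ⟨hzz, hzz⟩
    | succ i =>
      obtain ⟨h₁, h₂⟩ := hwi i
      rw [Ultrafilter.map_map, ← iterate_succ] at h₁ h₂
      exact ⟨by nth_rw 1 [← hzw]; rw [add_assoc, h₁, hzw],
        by nth_rw 2 [← hwz]; rw [← add_assoc, h₂, hwz]⟩

theorem exists_idempotent_subsymmetricUF (K : ℕ) : ∃ w ∈ subsymmetricUF K, ∀ i j,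
    w.map negT^[i] + w.map negT^[j] = w.map negT^[min i j] := by
  obtain ⟨_, ⟨w, hw, rfl⟩, h⟩ := exists_absorbing_negT_iterate K.zero_le
  simp only [iterate_zero, Ultrafilter.map_id] at h
  refine ⟨w, hw, fun i j ↦ ?_⟩
  rcases le_total i j with hij | hij
  · obtain ⟨l, rfl⟩ := Nat.exists_eq_add_of_le' hij
    rw [← map_negT_iterate_map l, ← map_negT_iterate_add hw.1 (hw.1.map_negT_iterate l), (h l).1,
      min_eq_left hij]
  · obtain ⟨l, rfl⟩ := Nat.exists_eq_add_of_le' hij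
    rw [← map_negT_iterate_map l, ← map_negT_iterate_add (hw.1.map_negT_iterate l) hw.1, (h l).2,
      min_eq_right hij]

end Ultrafilters

section Fusion

open Filter PiNat

attribute [local instance] Ultrafilter.add

theorem IsCofiniteUF.accepts_isBlockSeq {K : ℕ} {u : Ultrafilter (ℕ → ℤ)}
    (hu : IsCofiniteUF K u) : Accepts u [] {x | IsBlockSeq K x} := by
  refine ⟨fun t ↦ {p | IsFin K p ∧ ∀ q ∈ t, (support q).Finite → BlockLt q p}, fun t ↦ ?_,
    fun x hx ↦ ⟨fun n ↦ (hx.2 n n.zero_le).1, fun m n hmn ↦ ?_⟩⟩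
  · refine inter_mem hu.1 <| (eventually_all_finite t.finite_toSet).2 fun q _ ↦ ?_
    exact eventually_imp_distrib_left.2 hu.eventually_blockLt
  · exact (hx.2 n n.zero_le).2 _ (mem_res_of_lt x hmn) (hx.2 m m.zero_le).1.1

/-- The states that a nondeterministic automaton, started in a state of `I`, can be in after
reading a word; the last letter of the word is listed first. -/
def reachable {S Λ α : Type*} (step : S → Λ → α → S) (I : Set S) : List α → Set S
  | [] => I
  | p :: t => image2 (fun s l ↦ step s l p) (reachable step I t) univ

theorem finite_reachable {S Λ α : Type*} [Finite Λ] {step : S → Λ → α → S} {I : Set S}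
    (hI : I.Finite) (t : List α) : (reachable step I t).Finite := by
  induction t with
  | nil => exact hI
  | cons p t ih => exact ih.image2 _ finite_univ

theorem exists_mem_forall_reachable {S Λ α : Type*} [Finite Λ] {step : S → Λ → α → S} {I : Set S}
    {f : Filter α} [f.NeBot] {A : Set (ℕ → α)} {Good : S → Prop} (hA : Accepts f [] A)
    (hI : I.Finite) (good_of_mem : ∀ s ∈ I, Good s)
    (good_step : ∀ s, Good s → ∀ l, ∀ᶠ p in f, Good (step s l p)) :
    ∃ x ∈ A, ∀ n, ∀ s ∈ reachable step I (res x n), Good s := by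
  obtain ⟨F, hF, hFA⟩ := hA
  have exists_next (t : List α) :
      ∃ p ∈ F t, ∀ s ∈ reachable step I t, ∀ l, Good s → Good (step s l p) := by
    refine ((eventually_mem_set.2 (hF t)).and ?_).exists
    refine (eventually_all_finite (finite_reachable hI t)).2 fun s _ ↦ eventually_all.2 fun l ↦ ?_
    by_cases hs : Good s
    · exact (good_step s hs l).mono fun _ h _ ↦ h
    · exact .of_forall fun _ h ↦ absurd h hs
  choose g hgF hg using exists_next
  obtain ⟨x, hx⟩ := exists_forall_eq_apply_res g
  refine ⟨x, hFA ⟨rfl, fun n _ ↦ hx n ▸ hgF _⟩, fun n ↦ ?_⟩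
  induction n with
  | zero => exact good_of_mem
  | succ n ih =>
    rw [res_succ]
    rintro _ ⟨s, hs, l, -, rfl⟩
    exact hx n ▸ hg _ s hs l (ih s hs)

/-- The progress made on a sequence of sums: the index of the task to which it belongs, the records
of the completed sums, and the value and depth of the sum under construction, where the depth of
`∑ n, negT^[i n] (p n)` is the least `i n`. -/
structure FusionState (ι β : Type*) where
  index : ι
  records : List β
  sum : ℕ → ℤ
  depth : ℕ

namespace FusionState

variable {ι β δ : Type*} {K : ℕ} {d : ι → ℕ} {W : ι → List β → Set (ℕ → ℤ)}
  {ρ : ι → List β → δ → (ℕ → ℤ) → β} {w : Ultrafilter (ℕ → ℤ)}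

/-- The state before the first summand; sums of elements of `FIN_{±K}` start with depth `K`. -/
def start (K : ℕ) (t : List β) (j : ι) : FusionState ι β := ⟨j, t, 0, K⟩

/-- The sum receives the summand `negT^[l.1] p`. It is thereby completed if `l.2 = some τ`, in
which case the record of it is computed by `ρ` from the option `τ`. -/
def step (ρ : ι → List β → δ → (ℕ → ℤ) → β) (s : FusionState ι β) (l : Fin (K + 1) × Option δ)
    (p : ℕ → ℤ) : FusionState ι β :=
  match l.2 with
  | none => { s with sum := s.sum + negT^[l.1] p, depth := min s.depth l.1 }
  | some τ => start K (ρ s.index s.records τ (s.sum + negT^[l.1] p) :: s.records) s.index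

/-- Every way of completing the sum at depth `d s.index` in a single step succeeds, `w`-almost
surely, in putting it into the target set `W s.index s.records`. -/
def IsPromising (K : ℕ) (d : ι → ℕ) (W : ι → List β → Set (ℕ → ℤ)) (w : Ultrafilter (ℕ → ℤ))
    (s : FusionState ι β) : Prop :=
  ∀ i ≤ K, min s.depth i = d s.index → ∀ᶠ y in w.map negT^[i], s.sum + y ∈ W s.index s.records

theorem isPromising_start (hW : ∀ j t, W j t ∈ w.map negT^[d j]) (t : List β) (j : ι) :
    IsPromising K d W w (start K t j) := by
  intro i hi hij
  simp only [start, min_eq_right hi] at hij ⊢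
  simp only [hij, zero_add]
  exact hW j t

theorem IsPromising.eventually_step {s : FusionState ι β} (hs : IsPromising K d W w s)
    (hww : ∀ i j, w.map negT^[i] + w.map negT^[j] = w.map negT^[min i j])
    (hW : ∀ j t, W j t ∈ w.map negT^[d j]) (l : Fin (K + 1) × Option δ) :
    ∀ᶠ p in w, IsPromising K d W w (step ρ s l p) := by
  obtain ⟨i, _ | τ⟩ := l
  · refine (eventually_all_finite (finite_Iic K)).2 fun i' hi' ↦ ?_
    change ∀ᶠ p in w, min (min s.depth i) i' = d s.index →
      ∀ᶠ y in w.map negT^[i'], s.sum + negT^[i] p + y ∈ W s.index s.records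
    refine eventually_imp_distrib_left.2 fun hmin ↦ ?_
    have promising_min := hs (min i i') (min_le_of_right_le hi') (by rwa [← min_assoc])
    rw [← hww] at promising_min
    change ∀ᶠ p in w, ∀ᶠ y in w.map negT^[i'], s.sum + (negT^[i] p + y) ∈ W s.index s.records
      at promising_min
    simpa only [add_assoc] using promising_min
  · exact .of_forall fun p ↦ isPromising_start hW _ _

theorem IsPromising.sum_mem {s : FusionState ι β} (hs : IsPromising K d W w s)
    (hw : IsCofiniteUF K w) (hsK : s.depth ≤ K) (hd : s.depth = d s.index) :
    s.sum ∈ W s.index s.records := by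
  have map_eq : w.map negT^[K] = pure 0 :=
    IsCofiniteUF.eq_pure_zero (by simpa using hw.map_negT_iterate K)
  have promising := hs K le_rfl (by rwa [min_eq_left hsK])
  rw [map_eq] at promising
  simpa using promising

variable {P : ℕ → ℕ → ℤ} {I : Set (FusionState ι β)} {i : ℕ → ℕ} {a b : ℕ} {t : List β} {j : ι}

theorem mem_reachable_partial_sum (hi : ∀ n, i n ≤ K)
    (h : start K t j ∈ reachable (step (K := K) ρ) I (res P a)) (hab : a ≤ b) :
    ⟨j, t, ∑ n ∈ Finset.Ico a b, negT^[i n] (P n), (Finset.Ico a b).fold min K i⟩ ∈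
      reachable (step (K := K) ρ) I (res P b) := by
  induction b, hab using Nat.le_induction with
  | base => simpa [start] using h
  | succ b hab ih =>
    refine ⟨_, ih, (⟨i b, Nat.lt_succ_of_le (hi b)⟩, none), mem_univ _, ?_⟩
    rw [Finset.sum_Ico_succ_top hab, ← Finset.insert_Ico_right_eq_Ico_add_one hab,
      Finset.fold_insert Finset.right_notMem_Ico, min_comm (i b)]
    rfl

theorem mem_reachable_next_start (hi : ∀ n, i n ≤ K) (τ : δ)
    (h : start K t j ∈ reachable (step (K := K) ρ) I (res P a)) (hab : a < b) :
    start K (ρ j t τ (∑ n ∈ Finset.Ico a b, negT^[i n] (P n)) :: t) j ∈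
      reachable (step (K := K) ρ) I (res P b) := by
  obtain ⟨b, rfl⟩ := Nat.exists_eq_add_one_of_ne_zero (Nat.ne_zero_of_lt hab)
  have hab' := Nat.le_of_lt_succ hab
  refine ⟨_, mem_reachable_partial_sum hi h hab', (⟨i b, Nat.lt_succ_of_le (hi b)⟩, some τ),
    mem_univ _, ?_⟩
  rw [Finset.sum_Ico_succ_top hab']
  rfl

end FusionState

open FusionState

theorem exists_fusion {ι β δ : Type*} [Finite ι] [Finite δ] {K : ℕ} {w : Ultrafilter (ℕ → ℤ)}
    (hw : IsCofiniteUF K w)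
    (hww : ∀ i j, w.map negT^[i] + w.map negT^[j] = w.map negT^[min i j])
    {d : ι → ℕ} {W : ι → List β → Set (ℕ → ℤ)} (hW : ∀ j t, W j t ∈ w.map negT^[d j])
    (ρ : ι → List β → δ → (ℕ → ℤ) → β) :
    ∃ P, IsBlockSeq K P ∧ ∀ (j : ι) (τ : ℕ → δ) (a : ℕ → ℕ) (i : ℕ → ℕ → ℕ), a 0 = 0 →
      (∀ m n, d j ≤ i m n ∧ i m n ≤ K) →
      (∀ m, ∃ n ∈ Finset.Ico (a m) (a (m + 1)), i m n = d j) →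
      ∃ R : ℕ → β, ∀ m, ∃ x ∈ W j (res R m), R m = ρ j (res R m) (τ m) x ∧
        x = ∑ n ∈ Finset.Ico (a m) (a (m + 1)), negT^[i m n] (P n) := by
  obtain ⟨P, hP, hgood⟩ := exists_mem_forall_reachable hw.accepts_isBlockSeq
    (step := step (K := K) ρ) (I := range (start K [])) (finite_range _)
    (forall_mem_range.2 (isPromising_start hW [])) fun s hs ↦ hs.eventually_step hww hW
  refine ⟨P, hP, fun j τ a i ha₀ hi hmin ↦ ?_⟩
  let x (m : ℕ) := ∑ n ∈ Finset.Ico (a m) (a (m + 1)), negT^[i m n] (P n)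
  obtain ⟨R, hR⟩ := exists_forall_eq_apply_res fun t : List β ↦
    ρ j t (τ t.length) (x t.length)
  simp only [res_length] at hR
  have ha (m : ℕ) : a m < a (m + 1) :=
    let ⟨_, hn, _⟩ := hmin m
    (Finset.nonempty_Ico).1 ⟨_, hn⟩
  have start_mem (m : ℕ) : start K (res R m) j ∈
      reachable (step (K := K) ρ) (range (start K [])) (res P (a m)) := by
    induction m with
    | zero => rw [ha₀]; exact mem_range_self j
    | succ m ih =>
      rw [res_succ, hR]
      exact mem_reachable_next_start (fun n ↦ (hi m n).2) (τ m) ih (ha m)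
  refine ⟨R, fun m ↦ ⟨x m, ?_, hR m, rfl⟩⟩
  obtain ⟨n, hn, hin⟩ := hmin m
  have fold_eq : (Finset.Ico (a m) (a (m + 1))).fold min K (i m) = d j :=
    le_antisymm ((Finset.fold_min_le _).2 (.inr ⟨n, hn, hin.le⟩))
      ((Finset.le_fold_min _).2 ⟨hin ▸ (hi m n).2, fun n _ ↦ (hi m n).1⟩)
  exact (hgood _ _ (mem_reachable_partial_sum (fun n ↦ (hi m n).2) (start_mem m)
    (ha m).le)).sum_mem hw (fold_eq.trans_le (hin ▸ (hi m n).2)) fold_eq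

end Fusion

section Spans

open PiNat

attribute [local instance] Ultrafilter.add

variable {J k : ℕ} {P Q Y : ℕ → ℕ → ℤ}

theorem InSpanPM.exists_finset {q : ℕ → ℤ} (h : InSpanPM J Y q) :
    ∃ (s : Finset ℕ) (e : ℕ → ℤˣ) (l : ℕ → ℕ), (∀ n ∈ s, l n < J) ∧ (∃ n ∈ s, l n = 0) ∧
      q = ∑ n ∈ s, e n • tetris^[l n] (Y n) := by
  obtain ⟨m, n, ε, l, hn, hε, hl, ⟨i₀, hi₀⟩, rfl⟩ := h
  let e (i : Fin (m + 1)) : ℤˣ := (Int.isUnit_iff.2 (hε i)).unit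
  refine ⟨.map ⟨n, hn.injective⟩ .univ, extend n e 1, extend n l 0, ?_, ⟨n i₀, ?_, ?_⟩, ?_⟩
  · simpa [hn.injective.extend_apply] using hl
  · simp
  · rw [hn.injective.extend_apply, hi₀]
  · simp [hn.injective.extend_apply, Units.smul_def, e]

theorem IsBlockSeq.tetris_iterate (hP : IsBlockSeq k P) (i : ℕ) :
    IsBlockSeq (k - i) fun n ↦ tetris^[i] (P n) :=
  hP.comp (fun _ hp ↦ hp.tetris_iterate i) fun p n hp ↦ by
    simp [tetris_iterate_eq_comp, hp, shrink_zero_right]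

theorem IsBlockSeq.phi (hP : IsBlockSeq (2 * k) P) : IsBlockSeq k fun n ↦ Phi (P n) :=
  hP.comp (fun _ ↦ IsFin.phi) fun p n hp ↦ by simp [Phi, hp]

theorem IsBlockSeq.exists_forall_ne_apply_eq_zero (hP : IsBlockSeq k P) (x : ℕ) :
    ∃ n₀, ∀ n ≠ n₀, P n x = 0 := by
  by_cases h : ∃ n₀, P n₀ x ≠ 0
  · obtain ⟨n₀, hn₀⟩ := h
    refine ⟨n₀, fun n hn ↦ of_not_not fun hnx ↦ ?_⟩
    rcases hn.lt_or_gt with hlt | hlt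
    · exact (hP.2 _ _ hlt x x hnx hn₀).false
    · exact (hP.2 _ _ hlt x x hn₀ hnx).false
  · push Not at h
    exact ⟨0, fun n _ ↦ h n⟩

theorem sum_apply_eq_ite {f : ℕ → ℕ → ℤ} {x n₀ : ℕ} (h : ∀ n ≠ n₀, f n x = 0) (s : Finset ℕ) :
    (∑ n ∈ s, f n) x = if n₀ ∈ s then f n₀ x else 0 := by
  rw [Finset.sum_apply, ← Finset.sum_ite_eq' s n₀ fun n ↦ f n x]
  refine Finset.sum_congr rfl fun n _ ↦ ?_
  split_ifs with hn
  · rfl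
  · exact h n hn

theorem IsBlockSeq.exists_strictMono_peaks (hY : IsBlockSeq J Y) (hJ : 0 < J) :
    ∃ x : ℕ → ℕ, StrictMono x ∧ ∀ n, |Y n (x n)| = J := by
  choose x hx using fun n ↦ (hY.1 n).2.2
  have apply_ne_zero (n : ℕ) : Y n (x n) ≠ 0 := by
    rw [← abs_pos, hx]
    exact_mod_cast hJ
  exact ⟨x, fun m n hmn ↦ hY.2 m n hmn _ _ (apply_ne_zero m) (apply_ne_zero n), hx⟩

theorem IsBlockSeq.sum_smul_tetris_apply_ne_zero (hY : IsBlockSeq J Y) {s : Finset ℕ}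
    {e : ℕ → ℤˣ} {l : ℕ → ℕ} (hl : ∀ n ∈ s, l n < J) {n x : ℕ} (hn : n ∈ s) (hx : |Y n x| = J) :
    (∑ n ∈ s, e n • tetris^[l n] (Y n)) x ≠ 0 := by
  have hln := hl n hn
  obtain ⟨n₀, hn₀⟩ := hY.exists_forall_ne_apply_eq_zero x
  obtain rfl : n = n₀ := of_not_not fun h ↦ by
    rw [hn₀ n h, abs_zero] at hx
    omega
  rw [sum_apply_eq_ite (n₀ := n) fun m hm ↦ by
      simp [tetris_iterate_eq_comp, hn₀ m hm, shrink_zero_right], if_pos hn, Pi.smul_apply,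
    Units.smul_def, smul_ne_zero_iff, tetris_iterate_eq_comp, comp_apply, ← abs_pos, ← abs_pos,
    abs_shrink, hx]
  exact ⟨by simp, by omega⟩

theorem IsBlockSeq.lt_of_sum_smul_tetris_blockLt (hY : IsBlockSeq J Y) {s s' : Finset ℕ}
    {e e' : ℕ → ℤˣ} {l l' : ℕ → ℕ} (hl : ∀ n ∈ s, l n < J) (hl' : ∀ n ∈ s', l' n < J)
    (h : BlockLt (∑ n ∈ s, e n • tetris^[l n] (Y n)) (∑ n ∈ s', e' n • tetris^[l' n] (Y n)))
    {n n' : ℕ} (hn : n ∈ s) (hn' : n' ∈ s') : n < n' := by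
  obtain ⟨x, hx, hxY⟩ := hY.exists_strictMono_peaks (Nat.zero_lt_of_lt (hl n hn))
  exact hx.lt_iff_lt.1 <| h _ _ (hY.sum_smul_tetris_apply_ne_zero hl hn (hxY n))
    (hY.sum_smul_tetris_apply_ne_zero hl' hn' (hxY n'))

theorem exists_cut_points {s : ℕ → Finset ℕ} (h : ∀ m, ∀ n ∈ s m, ∀ n' ∈ s (m + 1), n < n') :
    ∃ a : ℕ → ℕ, a 0 = 0 ∧ ∀ m, s m ⊆ Finset.Ico (a m) (a (m + 1)) := by
  refine ⟨fun m ↦ m.casesOn 0 fun m ↦ (s m).sup (· + 1), rfl, fun m n hn ↦ Finset.mem_Ico.2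
    ⟨?_, Finset.le_sup (f := (· + 1)) hn⟩⟩
  cases m with
  | zero => exact n.zero_le
  | succ m => exact Finset.sup_le fun n' hn' ↦ h m n' hn' n hn

/-- The power of `-T` that, up to the overall sign `σ`, best approximates the map `e • T ^ (2 * L)`:
their values differ by at most one. -/
def negTExponent (σ e : ℤˣ) (L : ℕ) : ℕ := if e = σ then 2 * L else 2 * L + 1

theorem abs_sub_negTExponent_le (σ e : ℤˣ) (L : ℕ) (v : ℤ) :
    |e * shrink (2 * L) v -
      σ * ((-1) ^ negTExponent σ e L * shrink (negTExponent σ e L) v)| ≤ 1 := by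
  rw [negTExponent]
  split_ifs with h
  · simp [h, pow_mul]
  · rw [Int.units_ne_iff_eq_neg.1 h, pow_succ, pow_mul, neg_one_sq, one_pow]
    have := abs_shrink_sub_shrink_succ_le (2 * L) v
    rcases Int.units_eq_one_or σ with rfl | rfl <;> rw [abs_le] at * <;> push_cast <;> omega

theorem smul_tetris_phi_apply (e : ℤˣ) (i j : ℕ) (p : ℕ → ℤ) (x : ℕ) :
    (e • tetris^[i] (tetris^[j] (Phi p))) x = (e * shrink (2 * (i + j)) (p x)).tdiv 2 := by
  rcases Int.units_eq_one_or e with rfl | rfl <;>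
    simp [tetris_iterate_eq_comp, phi_eq_comp, shrink_shrink, shrink_tdiv_two, mul_add]

/-- The sum of powers of `-T` approximates the given one, before halving, with error at most one;
together with the distance to `z` this makes two, which `Phi` halves again. -/
theorem exists_negT_sum_approx (hP : IsBlockSeq (2 * k) P) (hJ : J ≤ k) {s t : Finset ℕ}
    (hst : s ⊆ t) (e : ℕ → ℤˣ) {l : ℕ → ℕ} (hl : ∀ n ∈ s, l n < J) (hl₀ : ∃ n ∈ s, l n = 0) :
    ∃ (σ : ℤˣ) (i : ℕ → ℕ), (∀ n, 2 * (k - J) ≤ i n ∧ i n ≤ 2 * k) ∧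
      (∃ n ∈ t, i n = 2 * (k - J)) ∧ ∀ z, normLe (σ • (∑ n ∈ t, negT^[i n] (P n)) - z) 1 →
        normLe ((∑ n ∈ s, e n • tetris^[l n] (tetris^[k - J] (Phi (P n)))) - Phi z) 1 := by
  obtain ⟨m, hm, hlm⟩ := hl₀
  let i (n : ℕ) := if n ∈ s then negTExponent (e m) (e n) (l n + (k - J)) else 2 * k
  refine ⟨e m, i, fun n ↦ ?_, ⟨m, hst hm, by simp [i, hm, hlm, negTExponent]⟩, fun z hz x ↦ ?_⟩
  · have := hl n
    simp only [i, negTExponent]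
    split_ifs <;> grind
  · obtain ⟨n, hn⟩ := hP.exists_forall_ne_apply_eq_zero x
    have hzx := hz x
    rw [Pi.sub_apply, Pi.smul_apply, Units.smul_def, smul_eq_mul,
      sum_apply_eq_ite (n₀ := n) fun n' hn' ↦ by
        simp [negT_iterate_eq, hn n' hn', shrink_zero_right]] at hzx
    rw [Pi.sub_apply, sum_apply_eq_ite (n₀ := n) fun n' hn' ↦ by
      simp [tetris_iterate_eq_comp, phi_eq_comp, hn n' hn', shrink_zero_right]]
    have hv := (hP.1 n).2.1 x
    set v := P n x
    suffices ∃ u : ℤ, |u - e m * (if n ∈ t then negT^[i n] (P n) x else 0)| ≤ 1 ∧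
        (if n ∈ s then (e n • tetris^[l n] (tetris^[k - J] (Phi (P n)))) x else 0) = u.tdiv 2 by
      obtain ⟨u, hu, hux⟩ := this
      rw [hux, phi_eq_comp]
      exact abs_tdiv_two_sub_tdiv_two_le ((abs_sub_le _ _ _).trans (add_le_add hu hzx))
    by_cases hns : n ∈ s
    · refine ⟨e n * shrink (2 * (l n + (k - J))) v, ?_, ?_⟩
      · simpa [hst hns, i, hns, negT_iterate_eq] using abs_sub_negTExponent_le (e m) (e n) _ v
      · rw [if_pos hns, smul_tetris_phi_apply]
    · refine ⟨0, ?_, by simp [hns]⟩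
      have : shrink (2 * k) v = 0 := by
        rw [← abs_eq_zero, abs_shrink]
        omega
      simp [i, hns, negT_iterate_eq, this, v]

/-- The points whose two signed versions are both within one of `Phi ⁻¹' B`; subsymmetry makes
this set as large as `Phi ⁻¹' B`. -/
def signedTarget (B : Set (ℕ → ℤ)) : Set (ℕ → ℤ) :=
  {x | ∀ σ : ℤˣ, σ • x ∈ approx 1 (Phi ⁻¹' B)}

theorem signedTarget_mem {K : ℕ} {u : Ultrafilter (ℕ → ℤ)} (hu : u ∈ subsymmetricUF K)
    {B : Set (ℕ → ℤ)} (hB : B ∈ u.map Phi) : signedTarget B ∈ u := by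
  have hB' : Phi ⁻¹' B ∈ u := hB
  filter_upwards [hB', hu.2 _ hB'] with x hx hx' σ
  rcases Int.units_eq_one_or σ with rfl | rfl
  · exact ⟨x, hx, fun n ↦ by simp⟩
  · simpa [Units.smul_def] using hx'

theorem exists_isBlockSeq_approx_span {w : Ultrafilter (ℕ → ℤ)} (hw : w ∈ subsymmetricUF (2 * k))
    (hww : ∀ i j, w.map negT^[i] + w.map negT^[j] = w.map negT^[min i j])
    {B : Fin k → List (ℕ → ℤ) → Set (ℕ → ℤ)}
    (hB : ∀ (j : Fin k) t, B j t ∈ (w.map negT^[2 * (k - (j + 1))]).map Phi) :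
    ∃ P, IsBlockSeq k P ∧ ∀ (j : Fin k) (Q : ℕ → ℕ → ℤ), IsBlockSeq (j + 1) Q →
      (∀ n, InSpanPM (j + 1) (fun m ↦ tetris^[k - (j + 1)] (P m)) (Q n)) →
        ∃ R ∈ treeBranches [] (B j), ∀ n, normLe (Q n - R n) 1 := by
  have hW (j : Fin k) (t : List (ℕ → ℤ)) :
      signedTarget (B j t) ∈ w.map negT^[2 * (k - (j + 1))] :=
    signedTarget_mem (map_negT_iterate_mem_subsymmetricUF hw _) (hB j t)
  have exists_lift (j : Fin k) (t : List (ℕ → ℤ)) (σ : ℤˣ) (x : ℕ → ℤ) :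
      x ∈ signedTarget (B j t) → ∃ z, Phi z ∈ B j t ∧ normLe (σ • x - z) 1 := fun hx ↦ hx σ
  choose! lift hlift using exists_lift
  obtain ⟨P, hP, hfusion⟩ := exists_fusion hw.1 hww hW fun j t σ x ↦ Phi (lift j t σ x)
  refine ⟨_, hP.phi, fun j Q hQ hspan ↦ ?_⟩
  have hJ : j.1 + 1 ≤ k := j.2
  have hY : IsBlockSeq (j + 1) fun n ↦ tetris^[k - (j + 1)] (Phi (P n)) := by
    simpa only [Nat.sub_sub_self hJ] using hP.phi.tetris_iterate (k - (j + 1))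
  choose s e l hl hl₀ hQs using fun n ↦ (hspan n).exists_finset
  obtain ⟨a, ha₀, hsa⟩ := exists_cut_points fun m n hn n' hn' ↦
    hY.lt_of_sum_smul_tetris_blockLt (hl m) (hl (m + 1))
      (hQs m ▸ hQs (m + 1) ▸ hQ.2 m (m + 1) m.lt_succ_self) hn hn'
  choose σ i hi hmin happrox using fun m ↦
    exists_negT_sum_approx hP hJ (hsa m) (e m) (hl m) (hl₀ m)
  obtain ⟨R, hR⟩ := hfusion j σ a i ha₀ hi hmin
  refine ⟨R, ⟨rfl, fun n _ ↦ ?_⟩, fun n ↦ ?_⟩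
  · obtain ⟨x, hx, hRx, -⟩ := hR n
    exact hRx ▸ (hlift j _ _ x hx).1
  · obtain ⟨x, hx, hRx, rfl⟩ := hR n
    rw [hQs, hRx]
    exact happrox n _ (hlift j _ _ _ hx).2

end Spans

section Souslin

open PiNat TopologicalSpace

theorem SouslinMeasurable.preimage {α β : Type*} [TopologicalSpace α] [TopologicalSpace β]
    {A : Set α} (hA : SouslinMeasurable A) {f : β → α} (hf : Continuous f) :
    SouslinMeasurable (f ⁻¹' A) := by
  intro 𝓕 hopen hcompl hunion hsouslin
  refine hA {B | f ⁻¹' B ∈ 𝓕} (fun O hO ↦ hopen _ (hO.preimage hf)) (fun B ↦ hcompl _)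
    (fun B hB C ↦ hunion _ hB _) fun F hF ↦ ?_
  have souslin_preimage := hsouslin (fun s ↦ f ⁻¹' F s) hF
  simpa only [mem_ofPred_eq, SouslinOp, preimage_iUnion, preimage_iInter] using souslin_preimage

variable {J : ℕ} {u : Ultrafilter (ℕ → ℤ)} {A O : Set (BlockSeq J)}

theorem BlockSeq.exists_initial_segment_of_isOpen (hO : IsOpen O) {P : BlockSeq J} (hP : P ∈ O) :
    ∃ N, ∀ Q : BlockSeq J, res Q.1 N = res P.1 N → Q ∈ O := by
  induction hO generalizing P with
  | basic O hO =>
    obtain ⟨s, rfl⟩ := hO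
    exact ⟨s.length, fun Q hQ i ↦ (res_eq_res.1 hQ i.2).trans (hP i)⟩
  | univ => exact ⟨0, fun _ _ ↦ mem_univ _⟩
  | inter O O' _ _ ih ih' =>
    obtain ⟨N, hN⟩ := ih hP.1
    obtain ⟨N', hN'⟩ := ih' hP.2
    refine ⟨max N N', fun Q hQ ↦ ?_⟩
    rw [res_eq_res] at hQ
    exact ⟨hN Q (res_eq_res.2 fun m hm ↦ hQ (lt_max_of_lt_left hm)),
      hN' Q (res_eq_res.2 fun m hm ↦ hQ (lt_max_of_lt_right hm))⟩
  | sUnion 𝒪 _ ih =>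
    obtain ⟨O, hO, hPO⟩ := hP
    obtain ⟨N, hN⟩ := ih O hO hPO
    exact ⟨N, fun Q hQ ↦ ⟨O, hO, hN Q hQ⟩⟩

theorem isRamsey_isBlockSeq : IsRamsey (u : Filter (ℕ → ℤ)) {x | IsBlockSeq J x} := by
  refine compl_compl {x | IsBlockSeq J x} ▸
    (IsTreeOpen.of_initial_segments fun x hx ↦ ?_).isRamsey.compl
  by_contra! h
  refine hx ⟨fun n ↦ ?_, fun m n hmn ↦ ?_⟩
  · obtain ⟨y, hyx, hy⟩ := h (n + 1)
    exact res_eq_res.1 hyx n.lt_succ_self ▸ (not_not.1 hy).1 n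
  · obtain ⟨y, hyx, hy⟩ := h (n + 1)
    rw [res_eq_res] at hyx
    exact hyx (hmn.trans n.lt_succ_self) ▸ hyx n.lt_succ_self ▸ (not_not.1 hy).2 m n hmn

theorem isRamsey_image_val_of_isOpen (hO : IsOpen O) :
    IsRamsey (u : Filter (ℕ → ℤ)) ((fun P : BlockSeq J ↦ P.1) '' O) := by
  let G : Set (ℕ → ℕ → ℤ) := {x | ∃ N, ∀ Q : BlockSeq J, res Q.1 N = res x N → Q ∈ O}
  have image_eq : (fun P : BlockSeq J ↦ P.1) '' O = {x | IsBlockSeq J x} ∩ G := by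
    ext x
    constructor
    · rintro ⟨P, hP, rfl⟩
      exact ⟨P.2, BlockSeq.exists_initial_segment_of_isOpen hO hP⟩
    · rintro ⟨hx, N, hN⟩
      exact ⟨⟨x, hx⟩, hN _ rfl, rfl⟩
  rw [image_eq]
  refine isRamsey_isBlockSeq.inter (IsTreeOpen.of_initial_segments ?_).isRamsey
  rintro x ⟨N, hN⟩
  exact ⟨N, fun y hy ↦ ⟨N, fun Q hQ ↦ hN Q (hQ.trans hy)⟩⟩

theorem SouslinMeasurable.isRamsey_image_val (hA : SouslinMeasurable A) :
    IsRamsey (u : Filter (ℕ → ℤ)) ((fun P : BlockSeq J ↦ P.1) '' A) := by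
  have val_injective : Injective fun P : BlockSeq J ↦ P.1 := Subtype.val_injective
  refine hA {B | IsRamsey (u : Filter (ℕ → ℤ)) ((fun P : BlockSeq J ↦ P.1) '' B)}
    (fun O hO ↦ isRamsey_image_val_of_isOpen hO) (fun B hB ↦ ?_) (fun B hB C hC ↦ ?_) fun F hF ↦ ?_
  · have range_eq : range (fun P : BlockSeq J ↦ P.1) = {x | IsBlockSeq J x} := Subtype.range_val
    rw [mem_ofPred_eq, image_compl_eq_range_sdiff_image val_injective, range_eq]
    exact isRamsey_isBlockSeq.inter (IsRamsey.compl hB)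
  · rw [mem_ofPred_eq, image_union]
    exact IsRamsey.union hB hC
  · rw [mem_ofPred_eq, SouslinOp, image_iUnion]
    simp only [val_injective.injOn.image_iInter_eq]
    exact IsRamsey.souslinOp hF

theorem exists_tree_monochromatic {κ : Type*} [Finite κ] (hu : IsCofiniteUF J u)
    {c : BlockSeq J → κ} (hc : ∀ i, SouslinMeasurable (c ⁻¹' {i})) :
    ∃ (i : κ) (B : List (ℕ → ℤ) → Set (ℕ → ℤ)), (∀ t, B t ∈ u) ∧
      ∀ x ∈ treeBranches [] B, ∃ X : BlockSeq J, c X = i ∧ X.1 = x :=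
  IsRamsey.exists_accepts_of_iUnion (fun i ↦ (hc i).isRamsey_image_val) <|
    hu.accepts_isBlockSeq.mono fun x hx ↦ mem_iUnion.2 ⟨c ⟨x, hx⟩, ⟨x, hx⟩, rfl, rfl⟩

end Souslin

/-- diagonalized version: for every Souslin measurable colouring `c` of the
disjoint union `⋃_{j=1}^k FIN_{±j}^[∞]` there are `i₁, …, i_k < r` and
`P ∈ FIN_{±k}^[∞]` such that `⟨T^{(k−j)}(P)⟩_{±j}^[∞] ⊆ (c⁻¹{i_j})₁` for each
`j = 1, …, k`. -/
theorem gowers_diagonalized (k r : ℕ) (hk : 1 ≤ k) (hr : 1 ≤ r)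
    (c : ((j : Fin k) × BlockSeq (j.1 + 1)) → Fin r)
    (hc : ∀ i : Fin r, SouslinMeasurable (c ⁻¹' {i})) :
    ∃ (i : Fin k → Fin r) (P : BlockSeq k),
      ∀ j : Fin k, ∀ Q : BlockSeq (j.1 + 1),
        (∀ n, InSpanPM (j.1 + 1) (fun m => tetris^[k - (j.1 + 1)] (P.1 m)) (Q.1 n)) →
        ∃ R : BlockSeq (j.1 + 1), c ⟨j, R⟩ = i j ∧ ∀ n, normLe (Q.1 n - R.1 n) 1 := by
  obtain ⟨w, hw, hww⟩ := exists_idempotent_subsymmetricUF (2 * k)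
  let u (j : Fin k) : Ultrafilter (ℕ → ℤ) := (w.map negT^[2 * (k - (j + 1))]).map Phi
  have hu (j : Fin k) : IsCofiniteUF (j + 1) (u j) := by
    refine IsCofiniteUF.map (hw.1.map_negT_iterate _) (fun p hp ↦ IsFin.phi ?_) fun p n hp ↦ by
      simp [Phi, hp]
    convert hp using 1
    omega
  have hc_index (j : Fin k) (i : Fin r) :
      SouslinMeasurable ((fun Q : BlockSeq (j.1 + 1) ↦ c ⟨j, Q⟩) ⁻¹' {i}) :=
    (hc i).preimage continuous_sigmaMk
  choose i B hB hBc using fun j ↦ exists_tree_monochromatic (hu j) (hc_index j)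
  obtain ⟨P, hP, happrox⟩ := exists_isBlockSeq_approx_span hw hww hB
  refine ⟨i, ⟨P, hP⟩, fun j Q hQ ↦ ?_⟩
  obtain ⟨R, hR, hQR⟩ := happrox j Q.1 Q.2 hQ
  obtain ⟨X, hX, rfl⟩ := hBc j R hR
  exact ⟨X, hX, hQR⟩
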